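/- Under the decoy-state assumptions, the single-photon yield satisfies Y(1) ≥ Y₁^L, where Y₁^L = μ/(μ(ν₁ − ν₂) − (ν₁² − ν₂²)) · [ Q(ν₁)·e^{ν₁} − Q(ν₂)·e^{ν₂} − ((ν₁² − ν₂²)/μ²)·(Q(μ)·e^{μ} − Y₀^L) ] and Y₀^L = max{ (ν₁·Q(ν₂)·e^{ν₂} − ν₂·Q(ν₁)·e^{ν₁}) / (ν₁ − ν₂), 0 }. -/

import Mathlib

/-- The gain for intensity `m` with yields `Y`: Poisson average of the yields. -/
noncomputable def decoyGain (Y : ℕ → ℝ) (m : ℝ) : ℝ :=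
  ∑' i : ℕ, Real.exp (-m) * m ^ i / (Nat.factorial i) * Y i

theorem aux_B (a b : ℝ) (hb : 0 ≤ b) (hab : b < a) (n : ℕ) :
    a * b ^ (n + 2) ≤ b * a ^ (n + 2) := by
  have h : b ^ (n + 1) ≤ a ^ (n + 1) := pow_le_pow_left₀ hb hab.le _
  have h2 : 0 ≤ a * b * (a ^ (n + 1) - b ^ (n + 1)) :=
    mul_nonneg (mul_nonneg (by linarith) hb) (by linarith)
  have e : b * a ^ (n + 2) - a * b ^ (n + 2) = a * b * (a ^ (n + 1) - b ^ (n + 1)) := by ring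
  linarith

theorem aux_A (a b m : ℝ) (hb : 0 ≤ b) (hab : b < a) (hm : a + b < m) (n : ℕ) :
    a ^ (n + 2) - b ^ (n + 2) ≤ (a ^ 2 - b ^ 2) * m ^ n := by
  induction n with
  | zero => simp
  | succ n ih =>
    have hB := aux_B a b hb hab n
    have h0 : 0 ≤ a ^ (n + 2) - b ^ (n + 2) := by
      have : b ^ (n + 2) ≤ a ^ (n + 2) := pow_le_pow_left₀ hb hab.le _
      linarith
    have h1 : (a + b) * (a ^ (n + 2) - b ^ (n + 2)) ≤ m * ((a ^ 2 - b ^ 2) * m ^ n) :=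
      mul_le_mul hm.le ih h0 (by linarith)
    have e1 : a ^ (n + 1 + 2) - b ^ (n + 1 + 2) = (a + b) * (a ^ (n + 2) - b ^ (n + 2))
        - (b * a ^ (n + 2) - a * b ^ (n + 2)) := by ring
    have e2 : (a ^ 2 - b ^ 2) * m ^ (n + 1) = m * ((a ^ 2 - b ^ 2) * m ^ n) := by ring
    linarith

theorem aux_summable (Y : ℕ → ℝ) (hY : ∀ i, 0 ≤ Y i ∧ Y i ≤ 1) (m : ℝ) (hm : 0 ≤ m) :
    Summable (fun i : ℕ => m ^ i / (Nat.factorial i) * Y i) := by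
  refine Summable.of_nonneg_of_le (fun i => ?_) (fun i => ?_) (Real.summable_pow_div_factorial m)
  · exact mul_nonneg (by positivity) (hY i).1
  · exact mul_le_of_le_one_right (by positivity) (hY i).2

theorem aux_gain (Y : ℕ → ℝ) (hY : ∀ i, 0 ≤ Y i ∧ Y i ≤ 1) (m : ℝ) (hm : 0 ≤ m) :
    decoyGain Y m * Real.exp m
      = Y 0 + m * Y 1 + ∑' i : ℕ, m ^ (i + 2) / (Nat.factorial (i + 2)) * Y (i + 2) := by
  have h : decoyGain Y m * Real.exp m = ∑' i : ℕ, m ^ i / (Nat.factorial i) * Y i := by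
    unfold decoyGain
    rw [← tsum_mul_right]
    refine tsum_congr fun i => ?_
    have : Real.exp (-m) * Real.exp m = 1 := by rw [← Real.exp_add]; simp
    calc _ = (Real.exp (-m) * Real.exp m) * (m ^ i / (Nat.factorial i) * Y i) := by ring
      _ = _ := by rw [this, one_mul]
  rw [h, ← (aux_summable Y hY m hm).sum_add_tsum_nat_add 2]
  simp [Finset.sum_range_succ]

theorem single_photon_yield_lower_bound (Y : ℕ → ℝ) (hY : ∀ i, 0 ≤ Y i ∧ Y i ≤ 1)
    (μ ν₁ ν₂ : ℝ) (hν₂ : 0 ≤ ν₂) (hν : ν₂ < ν₁) (hμ : ν₁ + ν₂ < μ) :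
    Y 1 ≥
      μ / (μ * (ν₁ - ν₂) - (ν₁ ^ 2 - ν₂ ^ 2)) *
        (decoyGain Y ν₁ * Real.exp ν₁ - decoyGain Y ν₂ * Real.exp ν₂
          - (ν₁ ^ 2 - ν₂ ^ 2) / μ ^ 2 *
            (decoyGain Y μ * Real.exp μ
              - max ((ν₁ * decoyGain Y ν₂ * Real.exp ν₂ - ν₂ * decoyGain Y ν₁ * Real.exp ν₁)
                      / (ν₁ - ν₂)) 0)) := by
  have hν₁ : 0 < ν₁ := by linarith
  have hμ0 : 0 < μ := by linarith
  have g1 := aux_gain Y hY ν₁ hν₁.le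
  have g2 := aux_gain Y hY ν₂ hν₂
  have g3 := aux_gain Y hY μ hμ0.le
  have s1 := (summable_nat_add_iff 2).2 (aux_summable Y hY ν₁ hν₁.le)
  have s2 := (summable_nat_add_iff 2).2 (aux_summable Y hY ν₂ hν₂)
  have s3 := (summable_nat_add_iff 2).2 (aux_summable Y hY μ hμ0.le)
  have hB : ν₁ * (∑' i : ℕ, ν₂ ^ (i + 2) / (Nat.factorial (i + 2)) * Y (i + 2))
      ≤ ν₂ * (∑' i : ℕ, ν₁ ^ (i + 2) / (Nat.factorial (i + 2)) * Y (i + 2)) := by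
    rw [← tsum_mul_left, ← tsum_mul_left]
    refine (s2.mul_left ν₁).tsum_le_tsum (fun i => ?_) (s1.mul_left ν₂)
    have hw : 0 ≤ Y (i + 2) / (Nat.factorial (i + 2)) := div_nonneg (hY _).1 (by positivity)
    have := mul_le_mul_of_nonneg_right (aux_B ν₁ ν₂ hν₂ hν i) hw
    calc _ = _ := by ring
      _ ≤ _ := this
      _ = _ := by ring
  have hA : (∑' i : ℕ, ν₁ ^ (i + 2) / (Nat.factorial (i + 2)) * Y (i + 2))
      ≤ (∑' i : ℕ, ν₂ ^ (i + 2) / (Nat.factorial (i + 2)) * Y (i + 2))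
        + (ν₁ ^ 2 - ν₂ ^ 2) / μ ^ 2 *
          (∑' i : ℕ, μ ^ (i + 2) / (Nat.factorial (i + 2)) * Y (i + 2)) := by
    rw [← tsum_mul_left, ← s2.tsum_add (s3.mul_left _)]
    refine s1.tsum_le_tsum (fun i => ?_) (s2.add (s3.mul_left _))
    have hw : 0 ≤ Y (i + 2) / (Nat.factorial (i + 2)) := div_nonneg (hY _).1 (by positivity)
    have := mul_le_mul_of_nonneg_right (aux_A ν₁ ν₂ μ hν₂ hν hμ i) hw
    have e : (ν₁ ^ 2 - ν₂ ^ 2) / μ ^ 2 * (μ ^ (i + 2) / (Nat.factorial (i + 2)) * Y (i + 2))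
        = (ν₁ ^ 2 - ν₂ ^ 2) * μ ^ i * (Y (i + 2) / (Nat.factorial (i + 2))) := by
      rw [pow_add μ i 2]
      field_simp
    have e2 : ν₁ ^ (i + 2) / (Nat.factorial (i + 2)) * Y (i + 2)
        = ν₂ ^ (i + 2) / (Nat.factorial (i + 2)) * Y (i + 2)
          + (ν₁ ^ (i + 2) - ν₂ ^ (i + 2)) * (Y (i + 2) / (Nat.factorial (i + 2))) := by ring
    simp only [e]
    linarith
  rw [mul_assoc ν₁, mul_assoc ν₂, g1, g2, g3]
  generalize (∑' i : ℕ, ν₁ ^ (i + 2) / (Nat.factorial (i + 2) : ℝ) * Y (i + 2)) = T1 at *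
  generalize (∑' i : ℕ, ν₂ ^ (i + 2) / (Nat.factorial (i + 2) : ℝ) * Y (i + 2)) = T2 at *
  generalize (∑' i : ℕ, μ ^ (i + 2) / (Nat.factorial (i + 2) : ℝ) * Y (i + 2)) = T3 at *
  have hd : 0 < ν₁ - ν₂ := by linarith
  have hmax : max ((ν₁ * (Y 0 + ν₂ * Y 1 + T2) - ν₂ * (Y 0 + ν₁ * Y 1 + T1)) / (ν₁ - ν₂)) 0
      ≤ Y 0 := by
    refine max_le ?_ (hY 0).1
    rw [div_le_iff₀ hd]
    linarith
  generalize max ((ν₁ * (Y 0 + ν₂ * Y 1 + T2) - ν₂ * (Y 0 + ν₁ * Y 1 + T1)) / (ν₁ - ν₂)) 0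
    = M at *
  have hD : 0 < μ * (ν₁ - ν₂) - (ν₁ ^ 2 - ν₂ ^ 2) := by
    have := mul_pos hd (sub_pos.2 hμ)
    linarith
  have hc : 0 ≤ (ν₁ ^ 2 - ν₂ ^ 2) / μ ^ 2 := by
    have := mul_nonneg hd.le (add_nonneg hν₁.le hν₂)
    exact div_nonneg (by linarith) (by positivity)
  have hcM := mul_le_mul_of_nonneg_left hmax hc
  have e : (μ * (ν₁ - ν₂) - (ν₁ ^ 2 - ν₂ ^ 2)) / μ * Y 1
      = (ν₁ - ν₂) * Y 1 - (ν₁ ^ 2 - ν₂ ^ 2) / μ ^ 2 * (μ * Y 1) := by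
    field_simp
  have key : (Y 0 + ν₁ * Y 1 + T1) - (Y 0 + ν₂ * Y 1 + T2)
      - (ν₁ ^ 2 - ν₂ ^ 2) / μ ^ 2 * (Y 0 + μ * Y 1 + T3 - M)
      ≤ (μ * (ν₁ - ν₂) - (ν₁ ^ 2 - ν₂ ^ 2)) / μ * Y 1 := by
    rw [e]
    generalize (ν₁ ^ 2 - ν₂ ^ 2) / μ ^ 2 = c at *
    linarith
  have hk := mul_le_mul_of_nonneg_left key (div_pos hμ0 hD).le
  refine hk.trans (le_of_eq ?_)
  generalize μ * (ν₁ - ν₂) - (ν₁ ^ 2 - ν₂ ^ 2) = D at *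
  field_simp
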